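/- Assume the family Ψ_n satisfies properties (P1), (P2), (P3). Then for each n ≥ 1 and each i = 1,…,n, the functions x_i ↦ Z_n(x₁,…,x_n) and x_i ↦ Z̄_n^±(x₁,…,x_n) are theta functions of degree 2(n+1), nome p and norm π/2 + η; explicitly, each is entire in x_i and satisfies f(x_i + π) = f(x_i) and f(x_i + πτ) = p^{−2(n+1)} e^{−2i(2(n+1)x_i − (η + π/2))} f(x_i). -/

import Mathlib

noncomputable section

open Complex
open scoped BigOperators

/-- Jacobi theta function `ϑ₁(z|τ)` with nome `p = e^{iπτ}` (Whittaker–Watson convention). -/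
def th1 (z τ : ℂ) : ℂ :=
  -Complex.I * ∑' n : ℤ, (-1 : ℂ) ^ n *
    Complex.exp ((Real.pi : ℂ) * Complex.I * τ * ((n : ℂ) + 1/2) ^ 2 + (2 * (n : ℂ) + 1) * Complex.I * z)

/-- Jacobi theta function `ϑ₂(z|τ)`. -/
def th2 (z τ : ℂ) : ℂ :=
  ∑' n : ℤ,
    Complex.exp ((Real.pi : ℂ) * Complex.I * τ * ((n : ℂ) + 1/2) ^ 2 + (2 * (n : ℂ) + 1) * Complex.I * z)

/-- Jacobi theta function `ϑ₃(z|τ)`. -/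
def th3 (z τ : ℂ) : ℂ :=
  ∑' n : ℤ, Complex.exp ((Real.pi : ℂ) * Complex.I * τ * (n : ℂ) ^ 2 + 2 * (n : ℂ) * Complex.I * z)

/-- Jacobi theta function `ϑ₄(z|τ)`. -/
def th4 (z τ : ℂ) : ℂ :=
  ∑' n : ℤ, (-1 : ℂ) ^ n *
    Complex.exp ((Real.pi : ℂ) * Complex.I * τ * (n : ℂ) ^ 2 + 2 * (n : ℂ) * Complex.I * z)

/-- The crossing parameter `η = π/3`. -/
def ηc : ℂ := (Real.pi : ℂ) / 3

/-- The elliptic nome `p = e^{iπτ}`. -/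
def pnome (τ : ℂ) : ℂ := Complex.exp ((Real.pi : ℂ) * Complex.I * τ)

/-- `ζ = (ϑ₁(η,p²)/ϑ₄(η,p²))²`. -/
def zet (τ : ℂ) : ℂ := (th1 ηc (2 * τ) / th4 ηc (2 * τ)) ^ 2

/-- The nome `p` is real with `0 < p < 1`. -/
def preal (τ : ℂ) : Prop := (pnome τ).im = 0 ∧ 0 < (pnome τ).re ∧ (pnome τ).re < 1

/-- A tuple given by a list of prescribed entries, padded by zeros. -/
def padded {n : ℕ} (l : List ℂ) : Fin n → ℂ := fun j => l.getD (j : ℕ) 0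

/-- Extension of a tuple by a list of prescribed further entries (padded by zeros). -/
def extL {m n : ℕ} (w : Fin m → ℂ) (l : List ℂ) : Fin n → ℂ :=
  fun j => if h : (j : ℕ) < m then w ⟨j, h⟩ else l.getD ((j : ℕ) - m) 0

/-- First `k` entries of a `2k`-tuple. -/
def firstHalf {k : ℕ} (x : Fin (2 * k) → ℂ) : Fin k → ℂ :=
  fun i => x ⟨(i : ℕ), by have := i.2; omega⟩

/-- Last `k` entries of a `2k`-tuple. -/
def secondHalf {k : ℕ} (x : Fin (2 * k) → ℂ) : Fin k → ℂ :=
  fun i => x ⟨k + (i : ℕ), by have := i.2; omega⟩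

/-- `𝕙(x,y) = ϑ₁(x−y+η)ϑ₁(x−y−η)ϑ₁(x+y+η)ϑ₁(x+y−η)`. -/
def hh (τ x y : ℂ) : ℂ :=
  th1 (x - y + ηc) τ * th1 (x - y - ηc) τ * th1 (x + y + ηc) τ * th1 (x + y - ηc) τ

/-- `𝔻(x₁,…,x_k) = ∏_{i<j} ϑ₁(x_j−x_i)ϑ₁(x_j+x_i)`. -/
def vdTheta (τ : ℂ) {k : ℕ} (y : Fin k → ℂ) : ℂ :=
  ∏ i : Fin k, ∏ j : Fin k, if i < j then th1 (y j - y i) τ * th1 (y j + y i) τ else 1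

/-- The elliptic Tsuchiya determinant `ℍ_{2k}(x₁,…,x_k; x_{k+1},…,x_{2k})`. -/
def tsuchiya (τ : ℂ) (k : ℕ) (x : Fin (2 * k) → ℂ) : ℂ :=
  (∏ i : Fin k, ∏ j : Fin k, hh τ (firstHalf x i) (secondHalf x j))
    / (vdTheta τ (firstHalf x) * vdTheta τ (secondHalf x))
    * Matrix.det (Matrix.of fun i j : Fin k => (hh τ (firstHalf x i) (secondHalf x j))⁻¹)

/-- The expression defining the elliptic Tsuchiya determinant is well defined:
the Vandermonde-type denominators and the entries `𝕙(x_i,x_{j+k})` are nonzero. -/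
def tsuDefined (τ : ℂ) (k : ℕ) (x : Fin (2 * k) → ℂ) : Prop :=
  (∀ i j : Fin k, i ≠ j →
    th1 (firstHalf x j - firstHalf x i) τ ≠ 0 ∧ th1 (firstHalf x j + firstHalf x i) τ ≠ 0) ∧
  (∀ i j : Fin k, i ≠ j →
    th1 (secondHalf x j - secondHalf x i) τ ≠ 0 ∧ th1 (secondHalf x j + secondHalf x i) τ ≠ 0) ∧
  (∀ i j : Fin k, hh τ (firstHalf x i) (secondHalf x j) ≠ 0)

/-- `h(w,w') = 1 − (3+ζ²)ww' + (1−ζ²)ww'(w+w')`. -/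
def hpol (ζ w w' : ℂ) : ℂ := 1 - (3 + ζ ^ 2) * w * w' + (1 - ζ ^ 2) * w * w' * (w + w')

/-- Vandermonde product `Δ(w₁,…,w_k) = ∏_{i<j}(w_j − w_i)`. -/
def vdm {k : ℕ} (y : Fin k → ℂ) : ℂ :=
  ∏ i : Fin k, ∏ j : Fin k, if i < j then y j - y i else 1

/-- The determinant-ratio expression defining the polynomial `H_{2k}`. -/
def Hratio (ζ : ℂ) (k : ℕ) (w : Fin (2 * k) → ℂ) : ℂ :=
  (∏ i : Fin k, ∏ j : Fin k, hpol ζ (firstHalf w i) (secondHalf w j))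
    / (vdm (firstHalf w) * vdm (secondHalf w))
    * Matrix.det (Matrix.of fun i j : Fin k => (hpol ζ (firstHalf w i) (secondHalf w j))⁻¹)

/-- The expression `Hratio` is well defined at `w`. -/
def HratioDefined (ζ : ℂ) (k : ℕ) (w : Fin (2 * k) → ℂ) : Prop :=
  (∀ i j : Fin k, i ≠ j → firstHalf w i ≠ firstHalf w j) ∧
  (∀ i j : Fin k, i ≠ j → secondHalf w i ≠ secondHalf w j) ∧
  (∀ i j : Fin k, hpol ζ (firstHalf w i) (secondHalf w j) ≠ 0)

/-- `H` is the family of Rosengren–Zinn-Justin polynomials `H_{2k}` for parameter `ζ`: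
for each `k`, `H k` is a polynomial function of the `2k` variables agreeing with the
determinant-ratio formula wherever the latter is defined, and `H 0 = 1`. -/
def IsHFamily (ζ : ℂ) (H : (k : ℕ) → (Fin (2 * k) → ℂ) → ℂ) : Prop :=
  (∀ w, H 0 w = 1) ∧
  (∀ k : ℕ, ∃ P : MvPolynomial (Fin (2 * k)) ℂ, ∀ w, H k w = MvPolynomial.eval w P) ∧
  (∀ (k : ℕ) (w : Fin (2 * k) → ℂ), HratioDefined ζ k w → H k w = Hratio ζ k w)

/-- Vertex weight `a(u)`. -/
def av (τ u : ℂ) : ℂ := th4 (2*ηc) (2*τ) * th1 (u + 2*ηc) (2*τ) * th4 u (2*τ)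
/-- Vertex weight `b(u)`. -/
def bv (τ u : ℂ) : ℂ := th4 (2*ηc) (2*τ) * th4 (u + 2*ηc) (2*τ) * th1 u (2*τ)
/-- Vertex weight `c(u)`. -/
def cv (τ u : ℂ) : ℂ := th1 (2*ηc) (2*τ) * th4 (u + 2*ηc) (2*τ) * th4 u (2*τ)
/-- Vertex weight `d(u)`. -/
def dv (τ u : ℂ) : ℂ := th1 (2*ηc) (2*τ) * th1 (u + 2*ηc) (2*τ) * th1 u (2*τ)
/-- `r(u) = a(u) + b(u)`. -/
def rv (τ u : ℂ) : ℂ := av τ u + bv τ u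

/-- Entries of the `R`-matrix of the eight-vertex model, in the basis `{↑↑,↑↓,↓↑,↓↓}`
identified with `Fin 2 × Fin 2` (`↑ = 0`, `↓ = 1`). -/
def Rent (τ u : ℂ) (p q : Fin 2 × Fin 2) : ℂ :=
  if p = q then (if p.1 = p.2 then av τ u else bv τ u)
  else if q = (p.2, p.1) then cv τ u
  else if p.1 = p.2 ∧ q.1 = q.2 then dv τ u
  else 0

/-- Entries of `Ř(u) = 𝒫 R(u)`. -/
def Rcheckent (τ u : ℂ) (p q : Fin 2 × Fin 2) : ℂ := Rent τ u (p.2, p.1) q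

/-- The boundary vector `χ(x) ∈ ℂ²⊗ℂ²`. -/
def chiV (τ lam x : ℂ) : Fin 2 × Fin 2 → ℂ := fun p =>
  if p = ((0 : Fin 2), (1 : Fin 2)) then th1 (x + lam) (2*τ) * th4 (x - lam - 2*ηc) (2*τ)
  else if p = ((1 : Fin 2), (0 : Fin 2)) then th1 (x - lam - 2*ηc) (2*τ) * th4 (x + lam) (2*τ)
  else 0

/-- The boundary vector `χ̄(x) ∈ ℂ²⊗ℂ²`. -/
def chibarV (τ lam x : ℂ) : Fin 2 × Fin 2 → ℂ := fun p =>
  if p = ((0 : Fin 2), (0 : Fin 2)) then th1 (x + lam) (2*τ) * th1 (x - lam - 2*ηc) (2*τ)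
  else if p = ((1 : Fin 2), (1 : Fin 2)) then th4 (x - lam - 2*ηc) (2*τ) * th4 (x + lam) (2*τ)
  else 0

/-- A family `Ψ_n(u₁,…,u_{2n+1}) ∈ (ℂ²)^{⊗(2n+1)}`, represented by its components
with respect to spin configurations `α : Fin (2n+1) → Fin 2` (`↑ = 0`, `↓ = 1`). -/
abbrev PsiFam := (n : ℕ) → (Fin (2 * n + 1) → ℂ) → (Fin (2 * n + 1) → Fin 2) → ℂ

/-- The action of `Ř(u)` on tensor factors `i`, `j` of `(ℂ²)^{⊗L}`. -/
def applyRc (τ u : ℂ) {L : ℕ} (i j : Fin L) (ψ : (Fin L → Fin 2) → ℂ) :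
    (Fin L → Fin 2) → ℂ := fun α =>
  ∑ s : Fin 2, ∑ t : Fin 2,
    Rcheckent τ u (α i, α j) (s, t) * ψ (Function.update (Function.update α i s) j t)

/-- Spin flip. -/
def flipS : Fin 2 → Fin 2 := fun s => if s = 0 then 1 else 0

/-- Components of the singlet `s = ↑↓ − ↓↑`. -/
def singletC : Fin 2 → Fin 2 → ℂ := fun s t =>
  if s = 0 ∧ t = 1 then 1 else if s = 1 ∧ t = 0 then -1 else 0

/-- Delete the entries at positions `i`, `i+1` from a tuple. -/
def delTwo {α : Type*} {n : ℕ} (i : ℕ) (u : Fin (2 * (n + 1) + 1) → α) : Fin (2 * n + 1) → α :=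
  fun j => if _h : (j : ℕ) < i then u ⟨j, by have := j.2; omega⟩
           else u ⟨(j : ℕ) + 2, by have := j.2; omega⟩

/-- The components of `Ψ_n` are entire functions of each `u_i`. -/
def PsiEntire (Ψ : PsiFam) : Prop :=
  ∀ (n : ℕ) (u : Fin (2*n+1) → ℂ) (i : Fin (2*n+1)) (α : Fin (2*n+1) → Fin 2),
    Differentiable ℂ fun z => Ψ n (Function.update u i z) α

/-- (P1): the exchange relations. -/
def PsiP1 (τ : ℂ) (Ψ : PsiFam) : Prop :=
  ∀ (n : ℕ) (u : Fin (2*n+1) → ℂ) (i j : Fin (2*n+1)), (j : ℕ) = (i : ℕ) + 1 →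
    applyRc τ (u j - u i) i j (Ψ n u)
      = fun α => rv τ (u j - u i) * Ψ n (fun l => u (Equiv.swap i j l)) α

/-- (P2): local spin flips. -/
def PsiP2 (τ : ℂ) (Ψ : PsiFam) : Prop :=
  ∀ (n : ℕ) (u : Fin (2*n+1) → ℂ) (i : Fin (2*n+1)) (α : Fin (2*n+1) → Fin 2),
    Ψ n u (Function.update α i (flipS (α i)))
      = (-(pnome τ)) ^ n * Complex.exp (-Complex.I * ∑ j, (u j - u i))
        * Ψ n (Function.update u i (u i + Real.pi * τ)) α

/-- (P3): quasi-periodicity of `Ψ_n` in each `u_i`. -/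
def PsiP3 (τ : ℂ) (Ψ : PsiFam) : Prop :=
  ∀ (n : ℕ) (u : Fin (2*n+1) → ℂ) (i : Fin (2*n+1)),
    (Ψ n (Function.update u i (u i + Real.pi))
      = fun α => (∏ j ∈ Finset.univ.erase i, (if α j = 0 then (1:ℂ) else -1)) * Ψ n u α) ∧
    (Ψ n (Function.update u i (u i + 2 * Real.pi * τ))
      = fun α => (pnome τ ^ (4*n))⁻¹ *
          Complex.exp (-2 * Complex.I * ∑ j, (u i - u j)) * Ψ n u α)

/-- (P4): the wheel condition. -/
def PsiP4 (Ψ : PsiFam) : Prop :=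
  ∀ (n : ℕ) (u : Fin (2*n+1) → ℂ),
    (∃ i j k : Fin (2*n+1), i < j ∧ j < k ∧ u j = u i + 2*ηc ∧ u k = u i + 4*ηc) →
    Ψ n u = 0

/-- (P5): the reduction relations. -/
def PsiP5 (τ : ℂ) (Ψ : PsiFam) : Prop :=
  ∀ (n : ℕ) (u : Fin (2*(n+1)+1) → ℂ) (i : ℕ) (hi : i + 1 < 2*(n+1)+1),
    u ⟨i+1, hi⟩ = u ⟨i, by omega⟩ + 2*ηc →
    Ψ (n+1) u = fun α =>
      (∏ j ∈ (Finset.univ.erase (⟨i, by omega⟩ : Fin (2*(n+1)+1))).erase ⟨i+1, hi⟩,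
          th1 (u ⟨i, by omega⟩ - u j - 2*ηc) τ)
        * singletC (α ⟨i, by omega⟩) (α ⟨i+1, hi⟩)
        * Ψ n (delTwo i u) (delTwo i α)

/-- (P6): `Ψ₀ = ↑ + ↓`. -/
def PsiP6 (Ψ : PsiFam) : Prop := ∀ u α, Ψ 0 u α = 1

/-- The inhomogeneity parameters `(x₁,−x₁,…,x_n,−x_n,0)`. -/
def interleave {n : ℕ} (x : Fin n → ℂ) : Fin (2*n+1) → ℂ := fun j =>
  if h : (j : ℕ) < 2*n then
    (if (j : ℕ) % 2 = 0 then x ⟨(j:ℕ)/2, by omega⟩ else -x ⟨(j:ℕ)/2, by omega⟩)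
  else 0

/-- Components of `χ(x)`. -/
def chiC (τ lam x : ℂ) (s t : Fin 2) : ℂ :=
  if s = 0 ∧ t = 1 then th1 (x + lam) (2*τ) * th4 (x - lam - 2*ηc) (2*τ)
  else if s = 1 ∧ t = 0 then th1 (x - lam - 2*ηc) (2*τ) * th4 (x + lam) (2*τ)
  else 0

/-- Components of `χ̄(x)`. -/
def chibarC (τ lam x : ℂ) (s t : Fin 2) : ℂ :=
  if s = 0 ∧ t = 0 then th1 (x + lam) (2*τ) * th1 (x - lam - 2*ηc) (2*τ)
  else if s = 1 ∧ t = 1 then th4 (x - lam - 2*ηc) (2*τ) * th4 (x + lam) (2*τ)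
  else 0

/-- The scalar product `Z_n(x₁,…,x_n) = ⟨ξ_n(x₁,…,x_n), Ψ_n(x₁,−x₁,…,x_n,−x_n,0)⟩`. -/
def Zfun (τ lam : ℂ) (Ψ : PsiFam) (n : ℕ) (x : Fin n → ℂ) : ℂ :=
  ∑ α : Fin (2*n+1) → Fin 2,
    (∏ m : Fin n, chiC τ lam (x m)
        (α ⟨2*(m:ℕ), by have := m.2; omega⟩) (α ⟨2*(m:ℕ)+1, by have := m.2; omega⟩))
      * (if α ⟨2*n, by omega⟩ = 0 then (1:ℂ) else 0)
      * Ψ n (interleave x) α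

/-- The scalar product `Z̄_n^±(x₁,…,x_n)`, with `ε = ±1`. -/
def Zbarfun (τ lam ε : ℂ) (Ψ : PsiFam) (n : ℕ) (x : Fin n → ℂ) : ℂ :=
  ∑ α : Fin (2*n+1) → Fin 2,
    (∏ m : Fin n, chibarC τ lam (x m)
        (α ⟨2*(m:ℕ), by have := m.2; omega⟩) (α ⟨2*(m:ℕ)+1, by have := m.2; omega⟩))
      * (if α ⟨2*n, by omega⟩ = 0 then (1:ℂ) else ε)
      * Ψ n (interleave x) α

/-- The normalisation constant `𝒩_n`. -/
def Ncoef (τ : ℂ) (n : ℕ) : ℂ :=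
  (-1 : ℂ) ^ ((n+1)/2) * (th1 ηc τ ^ (n^2))⁻¹ * (th4 0 (2*τ) / th4 ηc (2*τ)) ^ (n*(n+1)/2)

/-- The vector `ψ_n = 𝒩_n Ψ_n(0,…,0)`. -/
def psiH (τ : ℂ) (Ψ : PsiFam) (n : ℕ) (α : Fin (2*n+1) → Fin 2) : ℂ :=
  Ncoef τ n * Ψ n (fun _ => 0) α

/-- The scalar product `S_n(μ) = ((⟨↑↓| + μ⟨↓↑|)^{⊗n} ⊗ ⟨↑|) ψ_n`. -/
def Sfun (τ : ℂ) (Ψ : PsiFam) (n : ℕ) (μ : ℂ) : ℂ :=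
  ∑ α : Fin (2*n+1) → Fin 2,
    (∏ m : Fin n,
      (if α ⟨2*(m:ℕ), by have := m.2; omega⟩ = 0 ∧ α ⟨2*(m:ℕ)+1, by have := m.2; omega⟩ = 1
        then (1:ℂ)
       else if α ⟨2*(m:ℕ), by have := m.2; omega⟩ = 1 ∧ α ⟨2*(m:ℕ)+1, by have := m.2; omega⟩ = 0
        then μ
       else 0))
      * (if α ⟨2*n, by omega⟩ = 0 then (1:ℂ) else 0) * psiH τ Ψ n α

/-- The scalar product `S̄_n^±(ν) = ((⟨↑↑| + ν⟨↓↓|)^{⊗n} ⊗ (⟨↑| ± ⟨↓|)) ψ_n`, with `ε = ±1`. -/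
def Sbarfun (τ ε : ℂ) (Ψ : PsiFam) (n : ℕ) (ν : ℂ) : ℂ :=
  ∑ α : Fin (2*n+1) → Fin 2,
    (∏ m : Fin n,
      (if α ⟨2*(m:ℕ), by have := m.2; omega⟩ = 0 ∧ α ⟨2*(m:ℕ)+1, by have := m.2; omega⟩ = 0
        then (1:ℂ)
       else if α ⟨2*(m:ℕ), by have := m.2; omega⟩ = 1 ∧ α ⟨2*(m:ℕ)+1, by have := m.2; omega⟩ = 1
        then ν
       else 0))
      * (if α ⟨2*n, by omega⟩ = 0 then (1:ℂ) else ε) * psiH τ Ψ n α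

/-- The alternating spin configuration `↑↓↑↓⋯↑`. -/
def altConf {L : ℕ} : Fin L → Fin 2 := fun j => if (j : ℕ) % 2 = 0 then 0 else 1

/-- The fully polarised spin configuration `↓⋯↓`. -/
def downConf {L : ℕ} : Fin L → Fin 2 := fun _ => 1

/-- The spin configuration `↑⋯↑↓` with a single `↓` at the last site. -/
def lastDownConf {n : ℕ} : Fin (2*n+1) → Fin 2 := fun j => if (j : ℕ) = 2*n then 1 else 0

/-- `J₂ = −1/2`. -/
def J2c : ℂ := -(1/2)
/-- `J₃ = 1/(1+ζ)`. -/
def J3c (ζ : ℂ) : ℂ := 1/(1+ζ)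
/-- `J₄ = 1/(1−ζ)`. -/
def J4c (ζ : ℂ) : ℂ := 1/(1-ζ)
/-- `μ̄ = (μ−1)²/((ζ²−1)μ)`. -/
def mubar (ζ μ : ℂ) : ℂ := (μ - 1)^2 / ((ζ^2 - 1)*μ)
/-- `ν̄ = (ν−ζ)(νζ−1)/((ζ²−1)ν)`. -/
def nubar (ζ ν : ℂ) : ℂ := (ν - ζ)*(ν*ζ - 1) / ((ζ^2 - 1)*ν)

/-- The elliptic function `w(x)`. -/
def wfun (τ x : ℂ) : ℂ :=
  th4 ηc (2*τ) / th4 0 (2*τ) * th1 x τ ^ 2 / (th1 (x - ηc) τ * th1 (x + ηc) τ)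

/-- `β₂ = η + π/2`. -/
def β2c : ℂ := ηc + (Real.pi : ℂ)/2
/-- `β₃ = η + π/2 + πτ/2`. -/
def β3c (τ : ℂ) : ℂ := ηc + (Real.pi : ℂ)/2 + (Real.pi : ℂ)*τ/2
/-- `β₄ = η + πτ/2`. -/
def β4c (τ : ℂ) : ℂ := ηc + (Real.pi : ℂ)*τ/2

/-- `f` is an (even) theta function of degree `m`, nome `p = e^{iπτ}` and norm `0`
with respect to each of its variables. -/
def ThetaLike (τ : ℂ) (m : ℕ) {n : ℕ} (X : (Fin n → ℂ) → ℂ) : Prop :=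
  ∀ (x : Fin n → ℂ) (i : Fin n),
    Differentiable ℂ (fun z => X (Function.update x i z)) ∧
    (∀ z, X (Function.update x i (z + Real.pi)) = X (Function.update x i z)) ∧
    (∀ z, X (Function.update x i (z + Real.pi * τ))
        = ((-(pnome τ)) ^ m)⁻¹ * Complex.exp (-2 * Complex.I * ((m : ℂ) * z))
            * X (Function.update x i z)) ∧
    (∀ z, X (Function.update x i (-z)) = X (Function.update x i z))

/-!
Theta functions of a fixed degree `m ≥ 1` and norm form a finite-dimensional space, because the
functional equation determines all Fourier coefficients from finitely many of them. A family of such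
functions depending on a further parameter is therefore a finite combination, by interpolation, of
fixed entire functions with coefficients taken from values of the family; if it is holomorphic in
each variable separately, it is jointly holomorphic. When the norm varies with the parameter, one
first multiplies by a translate of a single member of the family, chosen so that the norm of the
product is constant, and divides again locally.

This makes `z ↦ Ψ_n(…, z, -z, …)` entire. Moving `(x_i, -x_i)` by `(π, -π)` multiplies the
components by a sign that the boundary vectors compensate. A move by `(πτ, -πτ)` amounts to two
local spin flips in which the sum of all variables cancels, leaving a factor that depends on `x_i`
only; the boundary vectors contribute the remaining part of the multiplier.
-/

section Interpolation

variable {K X : Type*} [Field K]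

lemma exists_finset_forall_eq_zero (V : Submodule K (X → K)) [FiniteDimensional K V] :
    ∃ S : Finset X, ∀ h ∈ V, (∀ s ∈ S, h s = 0) → h = 0 := by
  classical
  let ev : X → Module.Dual K V := fun x => LinearMap.proj x ∘ₗ V.subtype
  have hfg : (Submodule.span K (Set.range ev)).FG := IsNoetherian.noetherian _
  obtain ⟨T, hT, hspan⟩ := (Submodule.fg_span_iff_fg_span_finset_subset _).mp hfg
  rw [← Set.image_univ] at hT
  obtain ⟨S, -, rfl⟩ := Finset.subset_set_image_iff.mp hT
  refine ⟨S, fun h hh hS => funext fun x => ?_⟩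
  have hle : Submodule.span K (Set.range ev) ≤ LinearMap.ker (Module.Dual.eval K V ⟨h, hh⟩) := by
    rw [hspan, Submodule.span_le, Finset.coe_image]
    rintro _ ⟨s, hs, rfl⟩
    exact hS s hs
  exact hle (Submodule.subset_span ⟨x, rfl⟩)

lemma exists_interpolation (V : Submodule K (X → K)) [FiniteDimensional K V] :
    ∃ (S : Finset X) (e : S → X → K), (∀ s, e s ∈ V) ∧ ∀ h ∈ V, h = ∑ s : S, h s • e s := by
  classical
  obtain ⟨S, hS⟩ := exists_finset_forall_eq_zero V
  let restrict : V →ₗ[K] S → K := LinearMap.pi fun s => LinearMap.proj s.1 ∘ₗ V.subtype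
  have hker : LinearMap.ker restrict = ⊥ := by
    refine LinearMap.ker_eq_bot'.mpr fun h hh => Subtype.ext (hS h h.2 fun s hs => ?_)
    exact congrFun hh ⟨s, hs⟩
  obtain ⟨extend, hextend⟩ := restrict.exists_leftInverse_of_injective hker
  refine ⟨S, fun s => extend fun t => if s = t then 1 else 0, fun s => (extend _).2,
    fun h hh => ?_⟩
  have key := congrArg V.subtype (LinearMap.congr_fun hextend ⟨h, hh⟩)
  rw [LinearMap.comp_apply, extend.pi_apply_eq_sum_univ, map_sum] at key
  exact key.symm

end Interpolation

lemma differentiable_of_separately_of_finiteDimensional {𝕜 E F : Type*}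
    [NontriviallyNormedField 𝕜] [NormedAddCommGroup E] [NormedSpace 𝕜 E] [NormedAddCommGroup F]
    [NormedSpace 𝕜 F] (V : Submodule 𝕜 (E → 𝕜)) [FiniteDimensional 𝕜 V]
    (hV : ∀ f ∈ V, Differentiable 𝕜 f) {h : E → F → 𝕜} (hmem : ∀ v, (fun s => h s v) ∈ V)
    (hdiff : ∀ s, Differentiable 𝕜 (h s)) :
    Differentiable 𝕜 fun q : E × F => h q.1 q.2 := by
  obtain ⟨S, e, he, hinterp⟩ := exists_interpolation V
  have hsum : (fun q : E × F => h q.1 q.2) = fun q => ∑ s : S, h s q.2 * e s q.1 := by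
    funext q
    simpa only [Finset.sum_apply, Pi.smul_apply, smul_eq_mul]
      using congrFun (hinterp _ (hmem q.2)) q.1
  rw [hsum]
  exact Differentiable.fun_sum fun s _ =>
    ((hdiff s).comp differentiable_snd).mul ((hV _ (he s)).comp differentiable_fst)

section FourierUniqueness

lemma integral_add_eq_of_periodic {K : ℂ → ℂ} (hK : Differentiable ℂ K) {T : ℝ}
    (hper : ∀ z, K (z + T) = K z) (c : ℂ) :
    ∫ x in (0 : ℝ)..T, K (x + c) = ∫ x in (0 : ℝ)..T, K x := by
  obtain ⟨P, hP⟩ := hK.isExactOn_univ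
  have hderiv : ∀ z, HasDerivAt P (K z) z := fun z => hP z (Set.mem_univ z)
  have hint : ∀ d : ℂ, ∫ x in (0 : ℝ)..T, K (x + d) = P (d + T) - P d := fun d => by
    have hcont : Continuous fun x : ℝ => K (x + d) := hK.continuous.comp (by fun_prop)
    rw [intervalIntegral.integral_eq_sub_of_hasDerivAt
      (fun x _ => ((hderiv (x + d)).comp_add_const (x : ℂ) d).comp_ofReal)
      (hcont.intervalIntegrable _ _), ofReal_zero, zero_add, add_comm (T : ℂ)]
  have hder : ∀ z, HasDerivAt (fun d => P (d + T) - P d) 0 z := fun z => by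
    have h := ((hderiv (z + T)).comp_add_const z T).sub (hderiv z)
    rwa [hper, sub_self] at h
  have hconst := is_const_of_deriv_eq_zero (fun z => (hder z).differentiableAt)
    (fun z => (hder z).deriv) c 0
  rw [hint c, hconst, ← hint 0]
  simp only [add_zero]

lemma eq_zero_of_forall_integral_exp_mul_eq_zero {F : ℝ → ℂ} (hF : Continuous F)
    (hper : Function.Periodic F (2 * Real.pi))
    (h : ∀ k : ℤ, ∫ x in (0 : ℝ)..2 * Real.pi, exp (I * k * x) * F x = 0) :
    F = 0 := by
  have : Fact (0 < 2 * Real.pi) := ⟨Real.two_pi_pos⟩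
  let f : C(AddCircle (2 * Real.pi), ℂ) := ⟨hper.lift, continuous_coinduced_dom.mpr hF⟩
  have hcoeff : fourierCoeff f = 0 := by
    funext k
    rw [fourierCoeff_eq_intervalIntegral f k 0, zero_add]
    refine smul_eq_zero_of_right _ (Eq.trans ?_ (h (-k)))
    refine intervalIntegral.integral_congr fun x _ => ?_
    have hexp : fourier (-k) (x : AddCircle (2 * Real.pi))
        = exp (I * (-k : ℤ) * x) := by
      rw [fourier_coe_apply]
      congr 1
      push_cast
      field_simp
    exact congrArg (· * F x) hexp
  funext x
  have hsum : Summable (fourierCoeff f) := hcoeff ▸ summable_zero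
  have hseries := has_pointwise_sum_fourier_series_of_summable hsum (x : AddCircle (2 * Real.pi))
  simp only [hcoeff, Pi.zero_apply, zero_smul] at hseries
  exact hseries.unique hasSum_zero

end FourierUniqueness

/-- A theta function of degree `m`, nome `p = e^{iπτ}` and norm `t`. -/
structure IsThetaFunction (τ : ℂ) (m : ℕ) (t : ℂ) (f : ℂ → ℂ) : Prop where
  differentiable : Differentiable ℂ f
  add_pi : ∀ z, f (z + Real.pi) = (-1) ^ m * f z
  add_pi_mul : ∀ z, f (z + Real.pi * τ)
    = ((-pnome τ) ^ m)⁻¹ * exp (-2 * I * (m * z - t)) * f z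

namespace IsThetaFunction

variable {τ t t' : ℂ} {m m' : ℕ} {f g : ℂ → ℂ}

lemma even_degree_iff {k : ℕ} : IsThetaFunction τ (2 * k) t f ↔ Differentiable ℂ f ∧
    (∀ z, f (z + Real.pi) = f z) ∧
    ∀ z, f (z + Real.pi * τ) = (pnome τ ^ (2 * k))⁻¹ * exp (-2 * I * (2 * k * z - t)) * f z := by
  have hsign : (-1 : ℂ) ^ (2 * k) = 1 := (even_two_mul k).neg_one_pow
  have hnome : (-pnome τ) ^ (2 * k) = pnome τ ^ (2 * k) := (even_two_mul k).neg_pow _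
  refine ⟨fun h => ⟨h.differentiable, fun z => ?_, fun z => ?_⟩, fun h => ⟨h.1, fun z => ?_,
    fun z => ?_⟩⟩
  · rw [h.add_pi, hsign, one_mul]
  · rw [h.add_pi_mul, hnome, Nat.cast_mul, Nat.cast_two]
  · rw [h.2.1, hsign, one_mul]
  · rw [h.2.2, hnome, Nat.cast_mul, Nat.cast_two]

lemma mul (hf : IsThetaFunction τ m t f) (hg : IsThetaFunction τ m' t' g) :
    IsThetaFunction τ (m + m') (t + t') fun z => f z * g z where
  differentiable := hf.differentiable.mul hg.differentiable
  add_pi z := by rw [hf.add_pi, hg.add_pi]; ring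
  add_pi_mul z := by
    have hexp : exp (-2 * I * ((m + m' : ℕ) * z - (t + t')))
        = exp (-2 * I * (m * z - t)) * exp (-2 * I * (m' * z - t')) := by
      rw [← exp_add]
      congr 1
      push_cast
      ring
    rw [hf.add_pi_mul, hg.add_pi_mul, hexp, pow_add, mul_inv]
    ring

lemma comp_add_const (hf : IsThetaFunction τ m t f) (δ : ℂ) :
    IsThetaFunction τ m (t - m * δ) fun z => f (z + δ) where
  differentiable := hf.differentiable.comp (differentiable_id.add_const δ)
  add_pi z := by rw [add_right_comm, hf.add_pi]
  add_pi_mul z := by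
    rw [add_right_comm, hf.add_pi_mul]
    ring_nf

lemma add_two_pi (hf : IsThetaFunction τ m t f) (z : ℂ) : f (z + (2 * Real.pi : ℝ)) = f z := by
  have hz : z + (2 * Real.pi : ℝ) = z + Real.pi + Real.pi := by push_cast; ring
  rw [hz, hf.add_pi, hf.add_pi, ← mul_assoc, ← mul_pow, neg_one_mul, neg_neg, one_pow, one_mul]

end IsThetaFunction

/-- The `k`-th Fourier integral of a `2π`-periodic function; up to normalisation this is its
Fourier coefficient of frequency `-k`. -/
def fourierMoment (f : ℂ → ℂ) (k : ℤ) : ℂ :=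
  ∫ x in (0 : ℝ)..2 * Real.pi, exp (I * k * x) * f x

namespace IsThetaFunction

variable {τ t : ℂ} {m : ℕ} {f : ℂ → ℂ}

lemma fourierMoment_eq_mul (hf : IsThetaFunction τ m t f) (k : ℤ) :
    fourierMoment f k = exp (I * k * (Real.pi * τ) + 2 * I * t) * ((-pnome τ) ^ m)⁻¹
      * fourierMoment f (k - 2 * m) := by
  have hdiff : Differentiable ℂ fun z => exp (I * k * z) * f z :=
    (by fun_prop : Differentiable ℂ fun z : ℂ => exp (I * k * z)).mul hf.differentiable
  have hper : ∀ z : ℂ, exp (I * k * (z + (2 * Real.pi : ℝ))) * f (z + (2 * Real.pi : ℝ))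
      = exp (I * k * z) * f z := fun z => by
    have hexp : I * k * (z + (2 * Real.pi : ℝ)) = I * k * z + k * (2 * Real.pi * I) := by
      push_cast
      ring
    rw [hf.add_two_pi, hexp, exp_add, exp_int_mul_two_pi_mul_I, mul_one]
  rw [fourierMoment, fourierMoment, ← integral_add_eq_of_periodic hdiff hper (Real.pi * τ),
    ← intervalIntegral.integral_const_mul]
  refine intervalIntegral.integral_congr fun x _ => ?_
  have hexp : exp (I * k * (x + Real.pi * τ)) * exp (-2 * I * (m * x - t))
      = exp (I * k * (Real.pi * τ) + 2 * I * t) * exp (I * (k - 2 * m : ℤ) * x) := by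
    rw [← exp_add, ← exp_add]
    congr 1
    push_cast
    ring
  change exp (I * k * (x + Real.pi * τ)) * f (x + Real.pi * τ) = _
  rw [hf.add_pi_mul]
  linear_combination ((-pnome τ) ^ m)⁻¹ * f x * hexp

lemma fourierMoment_eq_zero_iff (hf : IsThetaFunction τ m t f) (k : ℤ) :
    fourierMoment f k = 0 ↔ fourierMoment f (k - 2 * m) = 0 := by
  rw [hf.fourierMoment_eq_mul k, mul_eq_zero_iff_left]
  exact mul_ne_zero (exp_ne_zero _) (inv_ne_zero (pow_ne_zero _ (neg_ne_zero.mpr (exp_ne_zero _))))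

lemma fourierMoment_emod_eq_zero_iff (hf : IsThetaFunction τ m t f) (k : ℤ) :
    fourierMoment f (k % (2 * m)) = 0 ↔ fourierMoment f k = 0 := by
  have hshift : ∀ q r : ℤ, fourierMoment f (r + 2 * m * q) = 0 ↔ fourierMoment f r = 0 := by
    intro q r
    induction q with
    | zero => rw [mul_zero, add_zero]
    | succ q ih => rw [hf.fourierMoment_eq_zero_iff, ← ih]; ring_nf
    | pred q ih => rw [← ih, hf.fourierMoment_eq_zero_iff (r + 2 * m * -q)]; ring_nf
  rw [← hshift (k / (2 * m)), Int.emod_add_mul_ediv]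

lemma eq_zero_of_fourierMoment_eq_zero (hf : IsThetaFunction τ m t f) (hm : m ≠ 0)
    (h : ∀ k : Fin (2 * m), fourierMoment f k = 0) : f = 0 := by
  have hall : ∀ k : ℤ, fourierMoment f k = 0 := fun k => by
    have hpos : (0 : ℤ) < 2 * m := by omega
    have hnonneg := Int.emod_nonneg k hpos.ne'
    have hlt := Int.emod_lt_of_pos k hpos
    rw [← hf.fourierMoment_emod_eq_zero_iff, ← Int.toNat_of_nonneg hnonneg]
    exact h ⟨(k % (2 * m)).toNat, by omega⟩
  have hreal : (fun x : ℝ => f x) = 0 :=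
    eq_zero_of_forall_integral_exp_mul_eq_zero (hf.differentiable.continuous.comp
      continuous_ofReal) (fun x => by rw [ofReal_add, hf.add_two_pi]) hall
  have hfreq : ∃ᶠ z in nhdsWithin 0 {0}ᶜ, f z = (0 : ℂ → ℂ) z := by
    have htend : Filter.Tendsto ((↑) : ℝ → ℂ) (nhdsWithin 0 {0}ᶜ) (nhdsWithin 0 {0}ᶜ) :=
      tendsto_nhdsWithin_iff.mpr ⟨(continuous_ofReal.tendsto' 0 0 ofReal_zero).mono_left
        nhdsWithin_le_nhds, by
          filter_upwards [self_mem_nhdsWithin] with x hx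
          exact ofReal_ne_zero.mpr hx⟩
    exact htend.frequently (Filter.Frequently.of_forall (congrFun hreal))
  exact AnalyticOnNhd.eq_of_frequently_eq (fun z _ => hf.differentiable.analyticAt z)
    (fun z _ => analyticAt_const) hfreq

end IsThetaFunction

/-- The vector space of theta functions of degree `m`, nome `e^{iπτ}` and norm `t`. -/
def thetaSpace (τ : ℂ) (m : ℕ) (t : ℂ) : Submodule ℂ (ℂ → ℂ) where
  carrier := {f | IsThetaFunction τ m t f}
  add_mem' {f g} hf hg :=
    { differentiable := hf.differentiable.add hg.differentiable
      add_pi := fun z => by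
        rw [Pi.add_apply, Pi.add_apply, hf.add_pi, hg.add_pi, mul_add]
      add_pi_mul := fun z => by
        rw [Pi.add_apply, Pi.add_apply, hf.add_pi_mul, hg.add_pi_mul, mul_add] }
  zero_mem' :=
    { differentiable := differentiable_const 0
      add_pi := fun _ => (mul_zero _).symm
      add_pi_mul := fun _ => (mul_zero _).symm }
  smul_mem' a f hf :=
    { differentiable := hf.differentiable.const_smul a
      add_pi := fun z => by
        rw [Pi.smul_apply, Pi.smul_apply, hf.add_pi, mul_smul_comm]
      add_pi_mul := fun z => by
        rw [Pi.smul_apply, Pi.smul_apply, hf.add_pi_mul, mul_smul_comm] }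

lemma finiteDimensional_thetaSpace (τ t : ℂ) {m : ℕ} (hm : m ≠ 0) :
    FiniteDimensional ℂ (thetaSpace τ m t) := by
  have hint : ∀ (f : thetaSpace τ m t) (k : ℤ), IntervalIntegrable
      (fun x : ℝ => exp (I * k * x) * f.1 x) MeasureTheory.volume 0 (2 * Real.pi) := fun f k =>
    (Continuous.mul (by fun_prop)
      (f.2.differentiable.continuous.comp continuous_ofReal)).intervalIntegrable _ _
  let moments : thetaSpace τ m t →ₗ[ℂ] Fin (2 * m) → ℂ :=
    { toFun := fun f k => fourierMoment f.1 k
      map_add' := fun f g => funext fun k => by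
        simp only [fourierMoment, Submodule.coe_add, Pi.add_apply, mul_add]
        exact intervalIntegral.integral_add (hint f k) (hint g k)
      map_smul' := fun a f => funext fun k => by
        simp only [fourierMoment, Submodule.coe_smul, Pi.smul_apply, mul_smul_comm,
          RingHom.id_apply]
        exact intervalIntegral.integral_smul a _ }
  refine Module.Finite.of_injective moments (LinearMap.ker_eq_bot.mp ?_)
  exact LinearMap.ker_eq_bot'.mpr fun f hf =>
    Subtype.ext (f.2.eq_zero_of_fourierMoment_eq_zero hm (congrFun hf))

section JointDifferentiability

variable {F : Type*} [NormedAddCommGroup F] [NormedSpace ℂ F] {τ : ℂ} {m : ℕ} {f : ℂ → F → ℂ}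

lemma differentiable_uncurry_of_isThetaFunction {t : ℂ} (hm : m ≠ 0)
    (htheta : ∀ v, IsThetaFunction τ m t fun s => f s v) (hdiff : ∀ s, Differentiable ℂ (f s)) :
    Differentiable ℂ fun q : ℂ × F => f q.1 q.2 :=
  have := finiteDimensional_thetaSpace τ t hm
  differentiable_of_separately_of_finiteDimensional (thetaSpace τ m t)
    (fun _ hg => hg.differentiable) htheta hdiff

theorem differentiable_uncurry_of_isThetaFunction_norm {t : F → ℂ} (hm : m ≠ 0)
    (ht : Differentiable ℂ t) (htheta : ∀ v, IsThetaFunction τ m (t v) fun s => f s v)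
    (hdiff : ∀ s, Differentiable ℂ (f s)) :
    Differentiable ℂ fun q : ℂ × F => f q.1 q.2 := by
  by_cases hzero : ∀ s v, f s v = 0
  · simp only [hzero, differentiable_const]
  push Not at hzero
  obtain ⟨s₁, v₁, hne⟩ := hzero
  rintro ⟨s₀, v₀⟩
  let δ : F → ℂ := fun v => s₁ - s₀ + (t v - t v₀) / m
  have hδ : Differentiable ℂ δ := by fun_prop
  have hfactor : Differentiable ℂ fun q : ℂ × F => f (q.1 + δ q.2) v₁ :=
    (htheta v₁).differentiable.comp (differentiable_fst.add (hδ.comp differentiable_snd))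
  have hproduct : Differentiable ℂ fun q : ℂ × F => f q.1 q.2 * f (q.1 + δ q.2) v₁ := by
    refine differentiable_uncurry_of_isThetaFunction (τ := τ) (m := m + m)
      (t := t v₀ + t v₁ - m * (s₁ - s₀)) (f := fun s v => f s v * f (s + δ v) v₁) (by omega)
      (fun v => ?_) fun s => ?_
    · have hm' : (m : ℂ) ≠ 0 := Nat.cast_ne_zero.mpr hm
      have hnorm : t v₀ + t v₁ - m * (s₁ - s₀) = t v + (t v₁ - m * δ v) := by
        simp only [δ]
        field_simp
        ring
      rw [hnorm]
      exact (htheta v).mul ((htheta v₁).comp_add_const (δ v))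
    · exact (hdiff s).mul ((htheta v₁).differentiable.comp (hδ.const_add s))
  have hne₀ : f (s₀ + δ v₀) v₁ ≠ 0 := by simpa only [δ, sub_self, zero_div, add_zero,
    add_sub_cancel] using hne
  refine ((hproduct (s₀, v₀)).mul ((hfactor (s₀, v₀)).inv hne₀)).congr_of_eventuallyEq ?_
  filter_upwards [hfactor.continuous.continuousAt.eventually_ne hne₀] with q hq
  exact (mul_inv_cancel_right₀ hq _).symm

end JointDifferentiability

section JacobiTheta

lemma th4_eq_jacobiTheta₂ (z τ : ℂ) : th4 z τ = jacobiTheta₂ (z / Real.pi + 1 / 2) τ := by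
  refine tsum_congr fun n => ?_
  rw [← exp_pi_mul_I, ← exp_int_mul, ← exp_add, jacobiTheta₂_term]
  congr 1
  field_simp [ofReal_ne_zero.mpr Real.pi_ne_zero]
  ring

lemma differentiable_th4 {τ : ℂ} (hτ : 0 < τ.im) : Differentiable ℂ fun z => th4 z τ := by
  have hθ : Differentiable ℂ fun w => jacobiTheta₂ w τ :=
    fun w => differentiableAt_jacobiTheta₂_fst w hτ
  simp only [th4_eq_jacobiTheta₂]
  exact hθ.comp (by fun_prop : Differentiable ℂ fun z : ℂ => z / Real.pi + 1 / 2)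

lemma th4_add_pi (z τ : ℂ) : th4 (z + Real.pi) τ = th4 z τ := by
  have harg : (z + Real.pi) / Real.pi + 1 / 2 = z / Real.pi + 1 / 2 + 1 := by
    rw [add_div, div_self (ofReal_ne_zero.mpr Real.pi_ne_zero), add_right_comm]
  rw [th4_eq_jacobiTheta₂, th4_eq_jacobiTheta₂, harg, jacobiTheta₂_add_left]

lemma th4_add_pi_mul (z τ : ℂ) :
    th4 (z + Real.pi * τ) τ = -exp (-(I * (Real.pi * τ + 2 * z))) * th4 z τ := by
  have hpi : (Real.pi : ℂ) ≠ 0 := ofReal_ne_zero.mpr Real.pi_ne_zero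
  have harg : (z + Real.pi * τ) / Real.pi + 1 / 2 = z / Real.pi + 1 / 2 + τ := by
    field_simp
    ring
  have hexp : -Real.pi * I * (τ + 2 * (z / Real.pi + 1 / 2))
      = -(I * (Real.pi * τ + 2 * z)) - Real.pi * I := by
    field_simp
    ring
  rw [th4_eq_jacobiTheta₂, th4_eq_jacobiTheta₂, harg, jacobiTheta₂_add_left', hexp,
    exp_sub_pi_mul_I]

lemma th1_eq_th4 (z τ : ℂ) :
    th1 z τ = -I * exp (I * (Real.pi * τ / 4 + z)) * th4 (z + Real.pi * τ / 2) τ := by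
  rw [th1, th4, mul_assoc (-I), ← tsum_mul_left (a := exp _)]
  refine congrArg _ (tsum_congr fun n => ?_)
  rw [mul_left_comm, ← exp_add]
  ring_nf

lemma differentiable_th1 {τ : ℂ} (hτ : 0 < τ.im) : Differentiable ℂ fun z => th1 z τ := by
  simp only [th1_eq_th4]
  exact (by fun_prop : Differentiable ℂ fun z : ℂ => -I * exp (I * (Real.pi * τ / 4 + z))).mul
    ((differentiable_th4 hτ).comp (differentiable_id.add_const _))

lemma th1_add_pi (z τ : ℂ) : th1 (z + Real.pi) τ = -th1 z τ := by
  have hexp : I * (Real.pi * τ / 4 + (z + Real.pi)) = I * (Real.pi * τ / 4 + z) + Real.pi * I := by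
    ring
  rw [th1_eq_th4, th1_eq_th4, add_right_comm z, th4_add_pi, hexp, exp_add_pi_mul_I]
  ring

lemma th4_add_half_period (z τ : ℂ) :
    th4 (z + Real.pi * τ / 2) τ = I * exp (-(I * (Real.pi * τ / 4 + z))) * th1 z τ := by
  rw [th1_eq_th4, exp_neg]
  linear_combination (I * I * th4 (z + Real.pi * τ / 2) τ)
    * mul_inv_cancel₀ (exp_ne_zero (I * (Real.pi * τ / 4 + z)))
    + th4 (z + Real.pi * τ / 2) τ * I_mul_I

lemma th1_add_half_period (z τ : ℂ) :
    th1 (z + Real.pi * τ / 2) τ = I * exp (-(I * (Real.pi * τ / 4 + z))) * th4 z τ := by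
  have hexp : exp (I * (Real.pi * τ / 4 + (z + Real.pi * τ / 2)))
      * exp (-(I * (Real.pi * τ + 2 * z))) = exp (-(I * (Real.pi * τ / 4 + z))) := by
    rw [← exp_add]
    ring_nf
  rw [th1_eq_th4, add_assoc z, add_halves, th4_add_pi_mul, ← hexp]
  ring

end JacobiTheta

section BoundaryVectors

/-- The eigenvalue of `σᶻ` on a basis spin. -/
def spinSign (s : Fin 2) : ℂ := if s = 0 then 1 else -1

lemma spinSign_mul_self (s : Fin 2) : spinSign s * spinSign s = 1 := by
  unfold spinSign
  split_ifs <;> norm_num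

lemma flipS_involutive : Function.Involutive flipS := fun s => by fin_cases s <;> rfl

/-- The component at spin `s` of the vector `ϑ₁(z,p²)|↑⟩ + ϑ₄(z,p²)|↓⟩`, out of which the boundary
vectors `χ` and `χ̄` are built. -/
def spinTheta (τ : ℂ) (s : Fin 2) (z : ℂ) : ℂ := if s = 0 then th1 z (2 * τ) else th4 z (2 * τ)

lemma differentiable_spinTheta {τ : ℂ} (hτ : 0 < τ.im) (s : Fin 2) :
    Differentiable ℂ (spinTheta τ s) := by
  have h2τ : 0 < (2 * τ).im := by simpa using hτ
  unfold spinTheta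
  split_ifs
  exacts [differentiable_th1 h2τ, differentiable_th4 h2τ]

lemma spinTheta_add_pi (τ : ℂ) (s : Fin 2) (z : ℂ) :
    spinTheta τ s (z + Real.pi) = -spinSign s * spinTheta τ s z := by
  unfold spinTheta spinSign
  split_ifs
  · rw [th1_add_pi, neg_one_mul]
  · rw [th4_add_pi, neg_neg, one_mul]

lemma spinTheta_flipS_add_pi_mul (τ : ℂ) (s : Fin 2) (z : ℂ) :
    spinTheta τ (flipS s) (z + Real.pi * τ)
      = I * exp (-(I * (Real.pi * τ / 2 + z))) * spinTheta τ s z := by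
  have hhalf : Real.pi * τ = Real.pi * (2 * τ) / 2 := by ring
  have hquarter : Real.pi * τ / 2 = Real.pi * (2 * τ) / 4 := by ring
  rw [hquarter, hhalf]
  fin_cases s
  · exact th4_add_half_period z (2 * τ)
  · exact th1_add_half_period z (2 * τ)

/-- The transformation behaviour of the components `c z s t` of a vector in `ℂ² ⊗ ℂ²`, shared by
`χ` and `χ̄`, that makes its pairing with `Ψ_n` a theta function. -/
structure IsBoundaryVector (τ : ℂ) (c : ℂ → Fin 2 → Fin 2 → ℂ) : Prop where
  differentiable : ∀ s t, Differentiable ℂ fun z => c z s t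
  add_pi : ∀ z s t, c (z + Real.pi) s t = spinSign s * spinSign t * c z s t
  flipS_add_pi_mul : ∀ z s t, c (z + Real.pi * τ) (flipS s) (flipS t)
    = -(pnome τ)⁻¹ * exp (-2 * I * (z - ηc)) * c z s t

lemma isBoundaryVector_mul_spinTheta {τ : ℂ} (hτ : 0 < τ.im) (lam : ℂ) {κ : Fin 2 → Fin 2 → ℂ}
    (hκ : ∀ s t, κ (flipS s) (flipS t) = κ s t) : IsBoundaryVector τ fun z s t =>
      κ s t * (spinTheta τ s (z + lam) * spinTheta τ t (z - lam - 2 * ηc)) where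
  differentiable s t := by
    have hs := differentiable_spinTheta hτ s
    have ht := differentiable_spinTheta hτ t
    fun_prop
  add_pi z s t := by
    rw [add_right_comm z, add_sub_right_comm z, add_sub_right_comm (z - lam), spinTheta_add_pi,
      spinTheta_add_pi]
    ring
  flipS_add_pi_mul z s t := by
    have hexp : exp (-(I * (Real.pi * τ / 2 + (z + lam))))
        * exp (-(I * (Real.pi * τ / 2 + (z - lam - 2 * ηc))))
        = (pnome τ)⁻¹ * exp (-2 * I * (z - ηc)) := by
      rw [pnome, ← exp_neg, ← exp_add, ← exp_add]
      ring_nf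
    rw [add_right_comm z, add_sub_right_comm z, add_sub_right_comm (z - lam), hκ,
      spinTheta_flipS_add_pi_mul, spinTheta_flipS_add_pi_mul]
    linear_combination κ s t * spinTheta τ s (z + lam) * spinTheta τ t (z - lam - 2 * ηc)
      * (I * I * hexp + (pnome τ)⁻¹ * exp (-2 * I * (z - ηc)) * I_mul_I)

lemma isBoundaryVector_chiC {τ : ℂ} (hτ : 0 < τ.im) (lam : ℂ) :
    IsBoundaryVector τ (chiC τ lam) := by
  convert isBoundaryVector_mul_spinTheta hτ lam (κ := fun s t => if s = t then 0 else 1)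
    (by simp only [flipS_involutive.injective.eq_iff, implies_true]) using 4 with z s t
  fin_cases s <;> fin_cases t <;> simp [chiC, spinTheta, mul_comm]

lemma isBoundaryVector_chibarC {τ : ℂ} (hτ : 0 < τ.im) (lam : ℂ) :
    IsBoundaryVector τ (chibarC τ lam) := by
  convert isBoundaryVector_mul_spinTheta hτ lam (κ := fun s t => if s = t then 1 else 0)
    (by simp only [flipS_involutive.injective.eq_iff, implies_true]) using 4 with z s t
  fin_cases s <;> fin_cases t <;> simp [chibarC, spinTheta, mul_comm]

end BoundaryVectors

section PsiFamily

variable {τ : ℂ} {Ψ : PsiFam} {n : ℕ}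

lemma update_self_add {ι M : Type*} [DecidableEq ι] [AddZeroClass M] (u : ι → M) (i : ι) (c : M) :
    Function.update u i (u i + c) = u + Pi.single i c := by
  funext j
  obtain rfl | hij := eq_or_ne j i
  · simp only [Function.update_self, Pi.add_apply, Pi.single_eq_same]
  · simp only [Function.update_of_ne hij, Pi.add_apply, Pi.single_eq_of_ne hij, add_zero]

/-- The spin configuration obtained from `α` by flipping the spin at site `i`. -/
def flipSpin {L : ℕ} (i : Fin L) (α : Fin L → Fin 2) : Fin L → Fin 2 :=
  Function.update α i (flipS (α i))

lemma flipSpin_involutive {L : ℕ} (i : Fin L) : Function.Involutive (flipSpin i) := fun α => by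
  rw [flipSpin, flipSpin, Function.update_self, Function.update_idem, flipS_involutive,
    Function.update_eq_self]

lemma PsiP3.apply_add_single_pi (h3 : PsiP3 τ Ψ) (u : Fin (2 * n + 1) → ℂ) (i : Fin (2 * n + 1))
    (α : Fin (2 * n + 1) → Fin 2) : Ψ n (u + Pi.single i (Real.pi : ℂ)) α
      = (∏ j, spinSign (α j)) * spinSign (α i) * Ψ n u α := by
  have herase : ∏ j ∈ Finset.univ.erase i, spinSign (α j)
      = (∏ j, spinSign (α j)) * spinSign (α i) := by
    rw [← Finset.prod_erase_mul _ _ (Finset.mem_univ i), mul_assoc, spinSign_mul_self, mul_one]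
  rw [← update_self_add, ← herase]
  exact congrFun (h3 n u i).1 α

lemma PsiP3.apply_add_single_pi_sub_single_pi (h3 : PsiP3 τ Ψ) (u : Fin (2 * n + 1) → ℂ)
    (a b : Fin (2 * n + 1)) (α : Fin (2 * n + 1) → Fin 2) :
    Ψ n (u + Pi.single a (Real.pi : ℂ) - Pi.single b (Real.pi : ℂ)) α
      = spinSign (α a) * spinSign (α b) * Ψ n u α := by
  have h := h3.apply_add_single_pi (u + Pi.single a (Real.pi : ℂ) - Pi.single b (Real.pi : ℂ)) b α
  rw [sub_add_cancel, h3.apply_add_single_pi] at h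
  have hprod : (∏ j, spinSign (α j)) ≠ 0 := Finset.prod_ne_zero_iff.mpr fun j _ =>
    left_ne_zero_of_mul_eq_one (spinSign_mul_self (α j))
  refine mul_left_cancel₀ hprod ?_
  linear_combination -spinSign (α b) * h - (∏ j, spinSign (α j))
    * Ψ n (u + Pi.single a (Real.pi : ℂ) - Pi.single b (Real.pi : ℂ)) α * spinSign_mul_self (α b)

lemma PsiP2.apply_flipSpin (h2 : PsiP2 τ Ψ) (u : Fin (2 * n + 1) → ℂ) (i : Fin (2 * n + 1))
    (α : Fin (2 * n + 1) → Fin 2) : Ψ n u (flipSpin i α)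
      = (-pnome τ) ^ n * exp (-I * (∑ j, u j - (2 * n + 1) * u i))
        * Ψ n (u + Pi.single i (Real.pi * τ)) α := by
  have hsum : ∑ j, (u j - u i) = ∑ j, u j - (2 * n + 1) * u i := by
    rw [Finset.sum_sub_distrib, Finset.sum_const, Finset.card_univ, Fintype.card_fin, nsmul_eq_mul]
    push_cast
    rfl
  rw [flipSpin, h2, update_self_add, hsum]

-- Both sides are reached from `u - πτ e_b`, by one spin flip each; the prefactors of the two flips
-- share the sum of all variables, which therefore drops out.
lemma PsiP2.apply_flipSpin_flipSpin (h2 : PsiP2 τ Ψ) (u : Fin (2 * n + 1) → ℂ)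
    {a b : Fin (2 * n + 1)} (hab : a ≠ b) (α : Fin (2 * n + 1) → Fin 2) :
    Ψ n (u + Pi.single a (Real.pi * τ) - Pi.single b (Real.pi * τ)) (flipSpin a (flipSpin b α))
      = exp (-I * ((2 * n + 1) * (u a - u b + Real.pi * τ))) * Ψ n u α := by
  set v := u - Pi.single b (Real.pi * τ) with hv
  have hva : v a = u a := by rw [hv, Pi.sub_apply, Pi.single_eq_of_ne hab, sub_zero]
  have hvb : v b = u b - Real.pi * τ := by rw [hv, Pi.sub_apply, Pi.single_eq_same]
  have hflip := h2.apply_flipSpin v a (flipSpin a (flipSpin b α))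
  rw [flipSpin_involutive, h2.apply_flipSpin, hva, hvb, hv, sub_add_cancel,
    sub_add_eq_add_sub] at hflip
  have hexp : exp (-I * (∑ j, v j - (2 * n + 1) * (u b - Real.pi * τ)))
      = exp (-I * (∑ j, v j - (2 * n + 1) * u a))
        * exp (-I * ((2 * n + 1) * (u a - u b + Real.pi * τ))) := by
    rw [← exp_add]
    ring_nf
  have hne : (-pnome τ) ^ n * exp (-I * (∑ j, v j - (2 * n + 1) * u a)) ≠ 0 :=
    mul_ne_zero (pow_ne_zero _ (neg_ne_zero.mpr (exp_ne_zero _))) (exp_ne_zero _)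
  refine mul_left_cancel₀ hne ?_
  rw [← hflip, hexp]
  ring

-- The quasi-periods in `u_a` are `2π` and `2πτ`; setting `u_a = 2s` turns them into `π` and `πτ`.
lemma isThetaFunction_psi (hent : PsiEntire Ψ) (h3 : PsiP3 τ Ψ) (u : Fin (2 * n + 1) → ℂ)
    (a : Fin (2 * n + 1)) (α : Fin (2 * n + 1) → Fin 2) :
    IsThetaFunction τ (2 * (2 * n)) (∑ j ∈ Finset.univ.erase a, u j)
      fun s => Ψ n (Function.update u a (2 * s)) α := by
  refine IsThetaFunction.even_degree_iff.mpr ⟨?_, fun s => ?_, fun s => ?_⟩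
  · exact (hent n u a α).comp (differentiable_id.const_mul 2)
  · have hstep : Function.update u a (2 * (s + Real.pi))
        = Function.update u a (2 * s) + Pi.single a (Real.pi : ℂ) + Pi.single a (Real.pi : ℂ) := by
      rw [← update_self_add, ← update_self_add]
      simp only [Function.update_self, Function.update_idem]
      ring_nf
    have hsign : ((∏ j, spinSign (α j)) * spinSign (α a))
        * ((∏ j, spinSign (α j)) * spinSign (α a)) = 1 := by
      rw [mul_mul_mul_comm, spinSign_mul_self, mul_one, ← Finset.prod_mul_distrib]
      exact Finset.prod_eq_one fun j _ => spinSign_mul_self (α j)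
    rw [hstep, h3.apply_add_single_pi, h3.apply_add_single_pi, ← mul_assoc, hsign, one_mul]
  · have h := congrFun (h3 n (Function.update u a (2 * s)) a).2 α
    have hsum : ∑ j, (2 * s - Function.update u a (2 * s) j)
        = 2 * (2 * n : ℕ) * s - ∑ j ∈ Finset.univ.erase a, u j := by
      rw [Finset.sum_sub_distrib, Finset.sum_update_of_mem (Finset.mem_univ a),
        Finset.sdiff_singleton_eq_erase, Finset.sum_const, Finset.card_univ, Fintype.card_fin,
        nsmul_eq_mul]
      push_cast
      ring
    rw [Function.update_self, Function.update_idem, hsum] at h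
    rw [mul_add, ← mul_assoc 2 (Real.pi : ℂ), h, show 4 * n = 2 * (2 * n) by ring]

theorem differentiable_psi_update_update (hent : PsiEntire Ψ) (h3 : PsiP3 τ Ψ)
    (u : Fin (2 * n + 1) → ℂ) {a b : Fin (2 * n + 1)} (hab : a ≠ b)
    (α : Fin (2 * n + 1) → Fin 2) : Differentiable ℂ fun q : ℂ × ℂ =>
      Ψ n (Function.update (Function.update u b q.2) a q.1) α := by
  have hn : 2 * (2 * n) ≠ 0 := by
    have := Fin.val_ne_of_ne hab
    omega
  have hnorm : Differentiable ℂ fun v : ℂ =>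
      ∑ j ∈ Finset.univ.erase a, Function.update u b v j :=
    Differentiable.fun_sum fun j _ =>
      differentiable_pi.mp (fun v => (hasFDerivAt_update u v).differentiableAt) j
  have hjoint := differentiable_uncurry_of_isThetaFunction_norm hn hnorm
    (fun v => isThetaFunction_psi hent h3 (Function.update u b v) a α) fun s => by
      simpa only [Function.update_comm hab] using hent n (Function.update u a (2 * s)) b α
  simpa only [Function.comp_def, mul_div_cancel₀ _ (two_ne_zero (α := ℂ))] using
    hjoint.comp (g := fun q : ℂ × ℂ => _)
      (by fun_prop : Differentiable ℂ fun q : ℂ × ℂ => (q.1 / 2, q.2))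

end PsiFamily

section BoundaryPairing

variable {n : ℕ}

/-- The site of `(ℂ²)^{⊗(2n+1)}` carrying the inhomogeneity parameter `x_i`. -/
def leftSite (i : Fin n) : Fin (2 * n + 1) := ⟨2 * i, by omega⟩

/-- The site of `(ℂ²)^{⊗(2n+1)}` carrying the inhomogeneity parameter `-x_i`. -/
def rightSite (i : Fin n) : Fin (2 * n + 1) := ⟨2 * i + 1, by omega⟩

lemma leftSite_ne_rightSite (i m : Fin n) : leftSite i ≠ rightSite m := by
  simp only [leftSite, rightSite, ne_eq, Fin.mk.injEq]
  omega

lemma interleave_update (x : Fin n → ℂ) (i : Fin n) (z : ℂ) :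
    interleave (Function.update x i z) = Function.update
      (Function.update (interleave x) (rightSite i) (-z)) (leftSite i) z := by
  funext j
  simp only [interleave, leftSite, rightSite, Function.update_apply, Fin.ext_iff]
  grind

lemma interleave_update_add (x : Fin n → ℂ) (i : Fin n) (z c : ℂ) :
    interleave (Function.update x i (z + c))
      = interleave (Function.update x i z) + Pi.single (leftSite i) c
        - Pi.single (rightSite i) c := by
  have hne := leftSite_ne_rightSite i i
  funext j
  rw [interleave_update, interleave_update, Pi.sub_apply, Pi.add_apply]
  obtain rfl | hl := eq_or_ne j (leftSite i)
  · rw [Function.update_self, Function.update_self, Pi.single_eq_same, Pi.single_eq_of_ne hne,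
      sub_zero]
  rw [Function.update_of_ne hl, Function.update_of_ne hl, Pi.single_eq_of_ne hl, add_zero]
  obtain rfl | hr := eq_or_ne j (rightSite i)
  · rw [Function.update_self, Function.update_self, Pi.single_eq_same, neg_add']
  · rw [Function.update_of_ne hr, Function.update_of_ne hr, Pi.single_eq_of_ne hr, sub_zero]

/-- The component at `α` of `c(x₁) ⊗ ⋯ ⊗ c(x_n) ⊗ w`. -/
def boundaryWeight (c : ℂ → Fin 2 → Fin 2 → ℂ) (w : Fin 2 → ℂ) (x : Fin n → ℂ)
    (α : Fin (2 * n + 1) → Fin 2) : ℂ :=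
  (∏ m, c (x m) (α (leftSite m)) (α (rightSite m))) * w (α (Fin.last (2 * n)))

/-- The scalar product `⟨c(x₁) ⊗ ⋯ ⊗ c(x_n) ⊗ w, Ψ_n(x₁,−x₁,…,x_n,−x_n,0)⟩`, of which `Z_n` and
`Z̄_n^±` are special cases. -/
def boundaryPairing (c : ℂ → Fin 2 → Fin 2 → ℂ) (w : Fin 2 → ℂ) (Ψ : PsiFam) (x : Fin n → ℂ) : ℂ :=
  ∑ α, boundaryWeight c w x α * Ψ n (interleave x) α

variable {τ : ℂ} {Ψ : PsiFam} {c : ℂ → Fin 2 → Fin 2 → ℂ}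

lemma Zfun_eq_boundaryPairing (τ lam : ℂ) (Ψ : PsiFam) (x : Fin n → ℂ) :
    Zfun τ lam Ψ n x = boundaryPairing (chiC τ lam) (fun s => if s = 0 then 1 else 0) Ψ x :=
  rfl

lemma Zbarfun_eq_boundaryPairing (τ lam ε : ℂ) (Ψ : PsiFam) (x : Fin n → ℂ) :
    Zbarfun τ lam ε Ψ n x
      = boundaryPairing (chibarC τ lam) (fun s => if s = 0 then 1 else ε) Ψ x :=
  rfl

/-- The part of `boundaryWeight c w x α` that does not involve `x i`. -/
def boundaryCofactor (c : ℂ → Fin 2 → Fin 2 → ℂ) (w : Fin 2 → ℂ) (x : Fin n → ℂ) (i : Fin n)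
    (α : Fin (2 * n + 1) → Fin 2) : ℂ :=
  (∏ m ∈ Finset.univ.erase i, c (x m) (α (leftSite m)) (α (rightSite m)))
    * w (α (Fin.last (2 * n)))

lemma boundaryWeight_update (c : ℂ → Fin 2 → Fin 2 → ℂ) (w : Fin 2 → ℂ) (x : Fin n → ℂ)
    (i : Fin n) (z : ℂ) (α : Fin (2 * n + 1) → Fin 2) :
    boundaryWeight c w (Function.update x i z) α
      = c z (α (leftSite i)) (α (rightSite i)) * boundaryCofactor c w x i α := by
  rw [boundaryWeight, boundaryCofactor, ← Finset.mul_prod_erase _ _ (Finset.mem_univ i),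
    Function.update_self, mul_assoc]
  congr 2
  refine Finset.prod_congr rfl fun m hm => ?_
  rw [Function.update_of_ne (Finset.ne_of_mem_erase hm)]

lemma boundaryCofactor_flipSpin (c : ℂ → Fin 2 → Fin 2 → ℂ) (w : Fin 2 → ℂ) (x : Fin n → ℂ)
    (i : Fin n) (α : Fin (2 * n + 1) → Fin 2) :
    boundaryCofactor c w x i (flipSpin (leftSite i) (flipSpin (rightSite i) α))
      = boundaryCofactor c w x i α := by
  have hflip : ∀ j : Fin (2 * n + 1), j ≠ leftSite i → j ≠ rightSite i →
      flipSpin (leftSite i) (flipSpin (rightSite i) α) j = α j := fun j hl hr => by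
    rw [flipSpin, Function.update_of_ne hl, flipSpin, Function.update_of_ne hr]
  have hlast : Fin.last (2 * n) ≠ leftSite i ∧ Fin.last (2 * n) ≠ rightSite i := by
    simp only [leftSite, rightSite, ne_eq, Fin.ext_iff, Fin.val_last]
    omega
  rw [boundaryCofactor, boundaryCofactor, hflip _ hlast.1 hlast.2]
  refine congrArg (· * _) (Finset.prod_congr rfl fun m hm => ?_)
  have hmi : (m : ℕ) ≠ i := Fin.val_ne_of_ne (Finset.ne_of_mem_erase hm)
  have hleft : leftSite m ≠ leftSite i := by
    simp only [leftSite, ne_eq, Fin.mk.injEq]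
    omega
  have hright : rightSite m ≠ rightSite i := by
    simp only [rightSite, ne_eq, Fin.mk.injEq]
    omega
  rw [hflip _ hleft (leftSite_ne_rightSite m i), hflip _ (leftSite_ne_rightSite i m).symm hright]

lemma boundaryWeight_update_add_pi_mul_flipSpin (hc : IsBoundaryVector τ c) (w : Fin 2 → ℂ)
    (x : Fin n → ℂ) (i : Fin n) (z : ℂ) (α : Fin (2 * n + 1) → Fin 2) :
    boundaryWeight c w (Function.update x i (z + Real.pi * τ))
        (flipSpin (leftSite i) (flipSpin (rightSite i) α))
      = -(pnome τ)⁻¹ * exp (-2 * I * (z - ηc)) * boundaryWeight c w (Function.update x i z) α := by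
  have hne := leftSite_ne_rightSite i i
  have hleft : flipSpin (leftSite i) (flipSpin (rightSite i) α) (leftSite i)
      = flipS (α (leftSite i)) := by
    rw [flipSpin, Function.update_self, flipSpin, Function.update_of_ne hne]
  have hright : flipSpin (leftSite i) (flipSpin (rightSite i) α) (rightSite i)
      = flipS (α (rightSite i)) := by
    rw [flipSpin, Function.update_of_ne hne.symm, flipSpin, Function.update_self]
  rw [boundaryWeight_update, boundaryWeight_update, boundaryCofactor_flipSpin, hleft, hright,
    hc.flipS_add_pi_mul, mul_assoc]

lemma differentiable_boundaryPairing_update (hent : PsiEntire Ψ) (h3 : PsiP3 τ Ψ)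
    (hc : IsBoundaryVector τ c) (w : Fin 2 → ℂ) (x : Fin n → ℂ) (i : Fin n) :
    Differentiable ℂ fun z => boundaryPairing c w Ψ (Function.update x i z) := by
  simp only [boundaryPairing, boundaryWeight_update, interleave_update]
  exact Differentiable.fun_sum fun α _ => ((hc.differentiable _ _).mul_const _).mul <|
    (differentiable_psi_update_update hent h3 (interleave x) (leftSite_ne_rightSite i i) α).comp
      (differentiable_id.prodMk differentiable_neg)

lemma boundaryPairing_update_add_pi (h3 : PsiP3 τ Ψ) (hc : IsBoundaryVector τ c) (w : Fin 2 → ℂ)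
    (x : Fin n → ℂ) (i : Fin n) (z : ℂ) :
    boundaryPairing c w Ψ (Function.update x i (z + Real.pi))
      = boundaryPairing c w Ψ (Function.update x i z) := by
  refine Finset.sum_congr rfl fun α _ => ?_
  rw [boundaryWeight_update, boundaryWeight_update, hc.add_pi, interleave_update_add,
    h3.apply_add_single_pi_sub_single_pi]
  have hsign : (spinSign (α (leftSite i)) * spinSign (α (rightSite i)))
      * (spinSign (α (leftSite i)) * spinSign (α (rightSite i))) = 1 := by
    rw [mul_mul_mul_comm, spinSign_mul_self, spinSign_mul_self, one_mul]
  linear_combination c z (α (leftSite i)) (α (rightSite i)) * boundaryCofactor c w x i α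
    * Ψ n (interleave (Function.update x i z)) α * hsign

lemma boundaryPairing_update_add_pi_mul (h2 : PsiP2 τ Ψ) (hc : IsBoundaryVector τ c)
    (w : Fin 2 → ℂ) (x : Fin n → ℂ) (i : Fin n) (z : ℂ) :
    boundaryPairing c w Ψ (Function.update x i (z + Real.pi * τ))
      = -(pnome τ)⁻¹ * exp (-2 * I * (z - ηc))
        * exp (-I * ((2 * n + 1) * (2 * z + Real.pi * τ)))
        * boundaryPairing c w Ψ (Function.update x i z) := by
  let flip := (flipSpin_involutive (rightSite i)).toPerm.trans
    (flipSpin_involutive (leftSite i)).toPerm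
  have hleft : interleave (Function.update x i z) (leftSite i) = z := by
    rw [interleave_update, Function.update_self]
  have hright : interleave (Function.update x i z) (rightSite i) = -z := by
    rw [interleave_update, Function.update_of_ne (leftSite_ne_rightSite i i).symm,
      Function.update_self]
  rw [boundaryPairing, ← Equiv.sum_comp flip, boundaryPairing, Finset.mul_sum]
  refine Finset.sum_congr rfl fun α _ => ?_
  change boundaryWeight c w _ (flipSpin (leftSite i) (flipSpin (rightSite i) α))
    * Ψ n _ (flipSpin (leftSite i) (flipSpin (rightSite i) α)) = _
  rw [boundaryWeight_update_add_pi_mul_flipSpin hc, interleave_update_add,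
    h2.apply_flipSpin_flipSpin _ (leftSite_ne_rightSite i i), hleft, hright]
  ring_nf

theorem isThetaFunction_boundaryPairing_update (hent : PsiEntire Ψ) (h2 : PsiP2 τ Ψ)
    (h3 : PsiP3 τ Ψ) (hc : IsBoundaryVector τ c) (w : Fin 2 → ℂ) (x : Fin n → ℂ) (i : Fin n) :
    IsThetaFunction τ (2 * (n + 1)) (ηc + Real.pi / 2)
      fun z => boundaryPairing c w Ψ (Function.update x i z) := by
  refine IsThetaFunction.even_degree_iff.mpr
    ⟨differentiable_boundaryPairing_update hent h3 hc w x i,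
      boundaryPairing_update_add_pi h3 hc w x i, fun z => ?_⟩
  have hexp : -(pnome τ)⁻¹ * exp (-2 * I * (z - ηc))
      * exp (-I * ((2 * n + 1) * (2 * z + Real.pi * τ)))
      = (pnome τ ^ (2 * (n + 1)))⁻¹
        * exp (-2 * I * (2 * (n + 1 : ℕ) * z - (ηc + Real.pi / 2))) := by
    rw [pnome, ← mul_neg_one, ← exp_pi_mul_I, ← exp_neg, ← exp_nat_mul, ← exp_neg, ← exp_add,
      ← exp_add, ← exp_add, ← exp_add]
    congr 1
    push_cast
    ring
  rw [boundaryPairing_update_add_pi_mul h2 hc, hexp]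

end BoundaryPairing

theorem stmt11_general {τ : ℂ} (hτ : 0 < τ.im) (lam : ℂ) {Ψ : PsiFam} (hent : PsiEntire Ψ)
    (h2 : PsiP2 τ Ψ) (h3 : PsiP3 τ Ψ) {n : ℕ} (x : Fin n → ℂ) (i : Fin n) :
    IsThetaFunction τ (2 * (n + 1)) (ηc + Real.pi / 2)
        (fun z => Zfun τ lam Ψ n (Function.update x i z)) ∧
      ∀ ε, IsThetaFunction τ (2 * (n + 1)) (ηc + Real.pi / 2)
        (fun z => Zbarfun τ lam ε Ψ n (Function.update x i z)) := by
  simp only [Zfun_eq_boundaryPairing, Zbarfun_eq_boundaryPairing]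
  exact ⟨isThetaFunction_boundaryPairing_update hent h2 h3 (isBoundaryVector_chiC hτ lam) _ x i,
    fun ε =>
      isThetaFunction_boundaryPairing_update hent h2 h3 (isBoundaryVector_chibarC hτ lam) _ x i⟩

theorem stmt11 (τ lam : ℂ) (hτ : 0 < τ.im) (Ψ : PsiFam)
    (hent : PsiEntire Ψ) (h1 : PsiP1 τ Ψ) (h2 : PsiP2 τ Ψ) (h3 : PsiP3 τ Ψ)
    (n : ℕ) (hn : 1 ≤ n) (x : Fin n → ℂ) (i : Fin n) :
    (Differentiable ℂ (fun z => Zfun τ lam Ψ n (Function.update x i z)) ∧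
      (∀ z, Zfun τ lam Ψ n (Function.update x i (z + Real.pi))
          = Zfun τ lam Ψ n (Function.update x i z)) ∧
      (∀ z, Zfun τ lam Ψ n (Function.update x i (z + Real.pi * τ))
          = (pnome τ ^ (2*(n+1)))⁻¹
            * Complex.exp (-2 * Complex.I * (2*((n:ℂ)+1)*z - (ηc + (Real.pi : ℂ)/2)))
            * Zfun τ lam Ψ n (Function.update x i z))) ∧
    (Differentiable ℂ (fun z => Zbarfun τ lam 1 Ψ n (Function.update x i z)) ∧
      (∀ z, Zbarfun τ lam 1 Ψ n (Function.update x i (z + Real.pi))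
          = Zbarfun τ lam 1 Ψ n (Function.update x i z)) ∧
      (∀ z, Zbarfun τ lam 1 Ψ n (Function.update x i (z + Real.pi * τ))
          = (pnome τ ^ (2*(n+1)))⁻¹
            * Complex.exp (-2 * Complex.I * (2*((n:ℂ)+1)*z - (ηc + (Real.pi : ℂ)/2)))
            * Zbarfun τ lam 1 Ψ n (Function.update x i z))) ∧
    (Differentiable ℂ (fun z => Zbarfun τ lam (-1) Ψ n (Function.update x i z)) ∧
      (∀ z, Zbarfun τ lam (-1) Ψ n (Function.update x i (z + Real.pi))
          = Zbarfun τ lam (-1) Ψ n (Function.update x i z)) ∧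
      (∀ z, Zbarfun τ lam (-1) Ψ n (Function.update x i (z + Real.pi * τ))
          = (pnome τ ^ (2*(n+1)))⁻¹
            * Complex.exp (-2 * Complex.I * (2*((n:ℂ)+1)*z - (ηc + (Real.pi : ℂ)/2)))
            * Zbarfun τ lam (-1) Ψ n (Function.update x i z))) := by
  have h := stmt11_general hτ lam hent h2 h3 x i
  simp only [IsThetaFunction.even_degree_iff, Nat.cast_add_one] at h
  exact ⟨h.1, h.2 1, h.2 (-1)⟩

end
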